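/- Let K be an algebraically closed field and n, m positive integers. The homogeneous elements of degree at most n^6 in S(n,m) = K[Mat_{n,n}^m]^{GL_n} form a separating subset of S(n,m); that is, β_sep(S(n,m)) ≤ n^6. -/

import Mathlib

open MvPolynomial Matrix

/-- Coordinate functions of an `m`-tuple of `n × n` matrices. -/
def matCoords {K : Type} [Field K] {n m : ℕ} (X : Fin m → Matrix (Fin n) (Fin n) K) :
    Fin m × Fin n × Fin n → K :=
  fun p => X p.1 p.2.1 p.2.2

/-- The ring of matrix semi-invariants `R(n,m) = K[Mat_{n,n}^m]^{SL_n × SL_n}`, where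
`(A,B)` acts by `(X_1, …, X_m) ↦ (A X_1 B⁻¹, …, A X_m B⁻¹)`. -/
noncomputable def matrixSemiInvariants (K : Type) [Field K] (n m : ℕ) :
    Subalgebra K (MvPolynomial (Fin m × Fin n × Fin n) K) :=
  ⨅ (A : SpecialLinearGroup (Fin n) K) (B : SpecialLinearGroup (Fin n) K)
    (X : Fin m → Matrix (Fin n) (Fin n) K),
      AlgHom.equalizer
        (aeval (matCoords fun i => A.val * X i * (B⁻¹).val))
        (aeval (matCoords X))

/-- The ring of matrix invariants `S(n,m) = K[Mat_{n,n}^m]^{GL_n}`, where `A` acts by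
simultaneous conjugation. -/
noncomputable def matrixInvariants (K : Type) [Field K] (n m : ℕ) :
    Subalgebra K (MvPolynomial (Fin m × Fin n × Fin n) K) :=
  ⨅ (A : GeneralLinearGroup (Fin n) K) (X : Fin m → Matrix (Fin n) (Fin n) K),
      AlgHom.equalizer
        (aeval (matCoords fun i => A.val * X i * (A⁻¹).val))
        (aeval (matCoords X))

/-!
A tuple of matrices is a finite-dimensional module over the free algebra, and conjugate tuples are
isomorphic modules. If `U` is a submodule and `p` a projection onto it, conjugating by
`p + s⁻¹ • (1 - p)` multiplies the block that maps a complement into `U` by `s`; letting `s → 0`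
shows that every invariant takes the same value on the module and on the direct sum of `U` and the
quotient. Hence every tuple can be replaced by a semisimple one without changing any invariant.

By the Brauer–Nesbitt theorem a semisimple module is determined by the characteristic polynomials
of the elements of the free algebra, whose coefficients are invariants. For a pair of tuples these
elements act through a subalgebra of a product of two matrix algebras, which has dimension at most
`2 n²` and so is spanned by words of length at most `2 n² - 1`. The coefficients of the
characteristic polynomials of combinations of these words have degree at most
`n (2 n² - 1) ≤ n⁶`.
-/

section CharpolyOfModules

variable {K A V W : Type*} [Field K] [Ring A] [Algebra K A]
  [AddCommGroup V] [Module K V] [Module A V] [IsScalarTower K A V]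
  [AddCommGroup W] [Module K W] [Module A W] [IsScalarTower K A W]

theorem isSemisimpleModule_prod {A V W : Type*} [Ring A] [AddCommGroup V] [Module A V]
    [AddCommGroup W] [Module A W] [IsSemisimpleModule A V] [IsSemisimpleModule A W] :
    IsSemisimpleModule A (V × W) := by
  have := IsSemisimpleModule.sup (.range (LinearMap.inl A V W)) (.range (LinearMap.inr A V W))
  rw [LinearMap.sup_range_inl_inr] at this
  exact .congr Submodule.topEquiv.symm

theorem exists_smul_eq_self_and_smul_eq_zero [FiniteDimensional K V] [FiniteDimensional K W]
    [IsSemisimpleModule A V] [IsSemisimpleModule A W]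
    (hVW : ∀ f : V →ₗ[A] W, f = 0) (hWV : ∀ f : W →ₗ[A] V, f = 0) :
    ∃ a : A, (∀ v : V, a • v = v) ∧ ∀ w : W, a • w = 0 := by
  have : IsSemisimpleModule A (V × W) := isSemisimpleModule_prod
  have : Module.Finite (Module.End A (V × W)) (V × W) := .of_restrictScalars_finite K _ _
  have inl_fst_commutes (g : Module.End A (V × W)) (x : V × W) :
      (((g x).1, 0) : V × W) = g (x.1, 0) := by
    have h₁ : (g (x.1, 0)).2 = 0 :=
      LinearMap.congr_fun (hVW (LinearMap.snd A V W ∘ₗ g ∘ₗ LinearMap.inl A V W)) x.1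
    have h₂ : (g (0, x.2)).1 = 0 :=
      LinearMap.congr_fun (hWV (LinearMap.fst A V W ∘ₗ g ∘ₗ LinearMap.inr A V W)) x.2
    have hx : g x = g (x.1, 0) + g (0, x.2) := by rw [← map_add]; simp
    exact Prod.ext (by simp [hx, h₂]) (by simp [h₁])
  -- By density, endomorphisms commuting with `End_A (V × W)` are actions of elements of `A`.
  let π : Module.End (Module.End A (V × W)) (V × W) :=
    { toFun := fun x ↦ (x.1, 0)
      map_add' := by simp
      map_smul' := inl_fst_commutes }
  obtain ⟨a, ha⟩ := Module.Finite.toModuleEnd_moduleEnd_surjective (R := A) (M := V × W) π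
  have hsmul (x : V × W) : a • x = (x.1, 0) := LinearMap.congr_fun ha x
  exact ⟨a, fun v ↦ congrArg Prod.fst (hsmul (v, 0)), fun w ↦ congrArg Prod.snd (hsmul (0, w))⟩

variable (K) in
theorem charpoly_lsmul_eq_of_linearEquiv [FiniteDimensional K V] [FiniteDimensional K W]
    (e : V ≃ₗ[A] W) (a : A) :
    (Algebra.lsmul K K V a).charpoly = (Algebra.lsmul K K W a).charpoly := by
  rw [← LinearEquiv.charpoly_conj (e.restrictScalars K)]
  congr 1
  ext w
  simp [LinearEquiv.conj_apply]

theorem charpoly_lsmul_prod [FiniteDimensional K V] [FiniteDimensional K W] (a : A) :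
    (Algebra.lsmul K K (V × W) a).charpoly =
      (Algebra.lsmul K K V a).charpoly * (Algebra.lsmul K K W a).charpoly := by
  rw [← LinearMap.charpoly_prodMap]
  congr 1

theorem exists_injective_of_charpoly_lsmul_eq [FiniteDimensional K V] [FiniteDimensional K W]
    [IsSemisimpleModule A W]
    (h : ∀ a : A, (Algebra.lsmul K K V a).charpoly = (Algebra.lsmul K K W a).charpoly)
    (S : Submodule A V) [IsSimpleModule A S] :
    ∃ f : S →ₗ[A] W, Function.Injective f := by
  by_contra! hno
  have hSW (f : S →ₗ[A] W) : f = 0 := f.injective_or_eq_zero.resolve_left (hno f)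
  have hWS (f : W →ₗ[A] S) : f = 0 := by
    by_contra hf
    obtain ⟨T, ⟨e⟩⟩ := LinearMap.linearEquiv_of_ne_zero hf
    exact hno (T.subtype ∘ₗ e) (T.injective_subtype.comp e.injective)
  have : FiniteDimensional K S := .of_injective (S.subtype.restrictScalars K) S.injective_subtype
  obtain ⟨a, haS, haW⟩ := exists_smul_eq_self_and_smul_eq_zero (K := K) hSW hWS
  have := IsSimpleModule.nontrivial A S
  obtain ⟨s, hs⟩ := exists_ne (0 : S)
  have hone : (Algebra.lsmul K K V a).HasEigenvalue 1 :=
    Module.End.hasEigenvalue_of_hasEigenvector (x := (s : V))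
      ⟨Module.End.mem_eigenspace_iff.2 (by simpa using congrArg Subtype.val (haS s)),
        by simpa using hs⟩
  have hzero : Algebra.lsmul K K W a = 0 := LinearMap.ext haW
  rw [Module.End.hasEigenvalue_iff_isRoot_charpoly, h, hzero, LinearMap.charpoly_zero] at hone
  simp at hone

theorem finrank_eq_of_charpoly_lsmul_eq [FiniteDimensional K V] [FiniteDimensional K W]
    (h : ∀ a : A, (Algebra.lsmul K K V a).charpoly = (Algebra.lsmul K K W a).charpoly) :
    Module.finrank K V = Module.finrank K W := by
  rw [← LinearMap.charpoly_natDegree (Algebra.lsmul K K V (1 : A)), h,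
    LinearMap.charpoly_natDegree]

/-- The **Brauer–Nesbitt theorem**. -/
theorem nonempty_linearEquiv_of_charpoly_lsmul_eq {K A V W : Type*} [Field K] [Ring A]
    [Algebra K A]
    [AddCommGroup V] [Module K V] [Module A V] [IsScalarTower K A V] [FiniteDimensional K V]
    [AddCommGroup W] [Module K W] [Module A W] [IsScalarTower K A W] [FiniteDimensional K W]
    [IsSemisimpleModule A V] [IsSemisimpleModule A W]
    (h : ∀ a : A, (Algebra.lsmul K K V a).charpoly = (Algebra.lsmul K K W a).charpoly) :
    Nonempty (V ≃ₗ[A] W) := by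
  have hdim := finrank_eq_of_charpoly_lsmul_eq h
  rcases subsingleton_or_nontrivial V with hV | hV
  · have : Subsingleton W := by
      rwa [← Module.finrank_zero_iff (R := K), ← hdim, Module.finrank_zero_iff]
    exact ⟨0⟩
  obtain ⟨S, hS⟩ := IsSemisimpleModule.exists_simple_submodule A V
  obtain ⟨f, hf⟩ := exists_injective_of_charpoly_lsmul_eq h S
  obtain ⟨V', hV'⟩ := exists_isCompl S
  obtain ⟨W', hW'⟩ := exists_isCompl f.range
  have finite_V (U : Submodule A V) : FiniteDimensional K U :=
    .of_injective (U.subtype.restrictScalars K) U.injective_subtype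
  have finite_W (U : Submodule A W) : FiniteDimensional K U :=
    .of_injective (U.subtype.restrictScalars K) U.injective_subtype
  let eS : S ≃ₗ[A] f.range := .ofInjective f hf
  let eV := S.prodEquivOfIsCompl V' hV'
  let eW := f.range.prodEquivOfIsCompl W' hW'
  have h' (a : A) : (Algebra.lsmul K K V' a).charpoly = (Algebra.lsmul K K W' a).charpoly := by
    have ha := h a
    rw [← charpoly_lsmul_eq_of_linearEquiv K eV, ← charpoly_lsmul_eq_of_linearEquiv K eW,
      charpoly_lsmul_prod, charpoly_lsmul_prod, charpoly_lsmul_eq_of_linearEquiv K eS] at ha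
    exact mul_left_cancel₀ (LinearMap.charpoly_monic _).ne_zero ha
  have : Module.finrank K V' < Module.finrank K V := by
    have := IsSimpleModule.nontrivial A S
    have hS_pos := Module.finrank_pos (R := K) (M := S)
    rw [← (eV.restrictScalars K).finrank_eq, Module.finrank_prod]
    omega
  obtain ⟨e'⟩ := nonempty_linearEquiv_of_charpoly_lsmul_eq h'
  exact ⟨eV.symm ≪≫ₗ eS.prodCongr e' ≪≫ₗ eW⟩
termination_by Module.finrank K V
decreasing_by assumption

end CharpolyOfModules

section FreeAlgebraModule

variable {K σ V W : Type*} [CommSemiring K]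
  [AddCommMonoid V] [Module K V] [Module (FreeAlgebra K σ) V] [IsScalarTower K (FreeAlgebra K σ) V]
  [AddCommMonoid W] [Module K W] [Module (FreeAlgebra K σ) W] [IsScalarTower K (FreeAlgebra K σ) W]

theorem map_smul_of_map_ι_smul (f : V →ₗ[K] W)
    (hf : ∀ (i : σ) (v : V), f (FreeAlgebra.ι K i • v) = FreeAlgebra.ι K i • f v)
    (a : FreeAlgebra K σ) (v : V) : f (a • v) = a • f v := by
  induction a using FreeAlgebra.induction generalizing v with
  | grade0 c => simp only [algebraMap_smul, map_smul]
  | grade1 i => exact hf i v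
  | add a b ha hb => simp only [add_smul, map_add, ha, hb]
  | mul a b ha hb => simp only [mul_smul, ha, hb]

end FreeAlgebraModule

/-- The column space `K^ι` as a module over the free algebra on `σ`, the generator `i` acting by
the matrix `x i`. -/
def TupleModule {K ι σ : Type*} (_ : σ → Matrix ι ι K) : Type _ := ι → K

namespace TupleModule

variable {K ι σ : Type*} [Field K] {x y : σ → Matrix ι ι K}

instance : AddCommGroup (TupleModule x) := inferInstanceAs (AddCommGroup (ι → K))

instance : Module K (TupleModule x) := inferInstanceAs (Module K (ι → K))

instance [Finite ι] : FiniteDimensional K (TupleModule x) :=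
  inferInstanceAs (FiniteDimensional K (ι → K))

variable [Fintype ι] [DecidableEq ι]

noncomputable instance : Module (FreeAlgebra K σ) (TupleModule x) :=
  Module.compHom (ι → K) (FreeAlgebra.lift K x).toRingHom

variable (x) in
/-- The identity map from the module of a tuple to the underlying column space. -/
def equiv : TupleModule x ≃ₗ[K] (ι → K) :=
  .refl K (ι → K)

theorem equiv_smul (a : FreeAlgebra K σ) (z : TupleModule x) :
    equiv x (a • z) = FreeAlgebra.lift K x a *ᵥ equiv x z :=
  rfl

theorem equiv_ι_smul (i : σ) (z : TupleModule x) :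
    equiv x (FreeAlgebra.ι K i • z) = x i *ᵥ equiv x z := by
  rw [equiv_smul, FreeAlgebra.lift_ι_apply]

instance : IsScalarTower K (FreeAlgebra K σ) (TupleModule x) where
  smul_assoc c a z := (equiv x).injective <| by
    rw [equiv_smul, map_smul, map_smul, equiv_smul, smul_mulVec]

variable (x) in
theorem charpoly_lsmul (a : FreeAlgebra K σ) :
    (Algebra.lsmul K K (TupleModule x) a).charpoly = (FreeAlgebra.lift K x a).charpoly :=
  Matrix.charpoly_toLin' _

/-- The homomorphism `TupleModule x → TupleModule y` given by a matrix intertwining `x` and `y`. -/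
noncomputable def ofSemiconjBy (p : Matrix ι ι K) (hp : ∀ i, SemiconjBy p (x i) (y i)) :
    TupleModule x →ₗ[FreeAlgebra K σ] TupleModule y :=
  let f : TupleModule x →ₗ[K] TupleModule y := (equiv y).symm ∘ₗ p.mulVecLin ∘ₗ equiv x
  { f with
    map_smul' := map_smul_of_map_ι_smul f fun i z ↦ (equiv y).injective <| by
      simp [f, equiv_ι_smul, (hp i).eq] }

theorem nonempty_linearEquiv_iff :
    Nonempty (TupleModule x ≃ₗ[FreeAlgebra K σ] TupleModule y) ↔
      ∃ u : GL ι K, ∀ i, y i = u.val * x i * u⁻¹.val := by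
  constructor
  · rintro ⟨e⟩
    let e' : (ι → K) ≃ₗ[K] (ι → K) :=
      (equiv x).symm ≪≫ₗ e.restrictScalars K ≪≫ₗ equiv y
    have e'_equiv (z : TupleModule x) : e' (equiv x z) = equiv y (e z) := rfl
    let p := LinearMap.toMatrix' (e' : (ι → K) →ₗ[K] (ι → K))
    have p_mulVec (z : ι → K) : p *ᵥ z = e' z := LinearMap.toMatrix'_mulVec _ z
    obtain ⟨u, hu⟩ : IsUnit p := mulVec_injective_iff_isUnit.1 fun z z' h ↦ by
      simpa [p_mulVec] using h
    refine ⟨u, fun i ↦ ?_⟩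
    rw [Units.eq_mul_inv_iff_mul_eq, hu]
    refine Matrix.ext_of_mulVec_single fun j ↦ ?_
    rw [← mulVec_mulVec, ← mulVec_mulVec, p_mulVec, p_mulVec]
    obtain ⟨z, hz⟩ := (equiv x).surjective (Pi.single j 1)
    rw [← hz, e'_equiv, ← equiv_ι_smul, ← equiv_ι_smul, e'_equiv, e.map_smul]
  · rintro ⟨u, hu⟩
    have semiconj (i : σ) : SemiconjBy u.val (x i) (y i) := by
      rw [hu i]
      exact u.mk_semiconjBy (x i)
    exact ⟨.ofBijective (ofSemiconjBy u semiconj)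
      ⟨mulVec_injective_iff_isUnit.2 u.isUnit, mulVec_surjective_iff_isUnit.2 u.isUnit⟩⟩

end TupleModule

section PolynomialEvaluation

variable {R σ τ ι : Type*}

theorem aeval_eq_of_forall_ne_zero_aeval_add_smul_eq [CommRing R] [IsDomain R] [Infinite R]
    {f : MvPolynomial σ R} {a b : σ → R} {c : R}
    (h : ∀ s : R, s ≠ 0 → aeval (a + s • b) f = c) : aeval a f = c := by
  let F : Polynomial R := aeval (fun i ↦ Polynomial.C (a i) + Polynomial.C (b i) * Polynomial.X) f
  have eval_F (s : R) : F.eval s = aeval (a + s • b) f := by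
    rw [← Polynomial.coe_aeval_eq_eval, comp_aeval_apply]
    congr with i
    simp [mul_comm s]
  have hF : F = Polynomial.C c := Polynomial.eq_of_infinite_eval_eq _ _ <|
    (Set.finite_singleton (0 : R)).infinite_compl.mono fun s hs ↦ by
      rw [Set.mem_ofPred_eq, eval_F, h s hs, Polynomial.eval_C]
  simpa [hF] using (eval_F 0).symm

theorem aeval_smul_of_isHomogeneous [CommSemiring R] {f : MvPolynomial σ R} {d : ℕ}
    (hf : f.IsHomogeneous d) (s : R) (x : σ → R) : aeval (s • x) f = s ^ d * aeval x f := by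
  simp only [aeval_def, eval₂_eq, Finset.mul_sum]
  refine Finset.sum_congr rfl fun e he ↦ ?_
  simp only [Pi.smul_apply, smul_eq_mul, mul_pow, Finset.prod_mul_distrib,
    Finset.prod_pow_eq_pow_sum, ← hf.degree_eq_sum_deg_support he]
  ring

theorem aeval_homogeneousComponent_eq [CommRing R] [IsDomain R] [Infinite R]
    {f : MvPolynomial σ R} {x y : σ → R} (h : ∀ s : R, aeval (s • x) f = aeval (s • y) f)
    (d : ℕ) : aeval x (homogeneousComponent d f) = aeval y (homogeneousComponent d f) := by
  let F (z : σ → R) : Polynomial R :=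
    ∑ k ∈ Finset.range (f.totalDegree + 1),
      Polynomial.monomial k (aeval z (homogeneousComponent k f))
  have eval_F (z : σ → R) (s : R) : (F z).eval s = aeval (s • z) f := by
    conv_rhs => rw [← sum_homogeneousComponent f]
    simp [F, Polynomial.eval_finsetSum,
      aeval_smul_of_isHomogeneous (homogeneousComponent_isHomogeneous _ f), mul_comm]
  have coeff_F (z : σ → R) : (F z).coeff d = aeval z (homogeneousComponent d f) := by
    simp only [F, Polynomial.finsetSum_coeff, Polynomial.coeff_monomial, Finset.sum_ite_eq',
      Finset.mem_range, ite_eq_left_iff, not_lt]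
    intro hd
    rw [homogeneousComponent_eq_zero _ _ hd, map_zero]
  have hF : F x = F y := Polynomial.funext fun s ↦ by rw [eval_F, eval_F, h]
  rw [← coeff_F, hF, coeff_F]

theorem totalDegree_aeval_le [CommSemiring R] {g : τ → MvPolynomial σ R} {L : ℕ}
    (hg : ∀ i, (g i).totalDegree ≤ L) (p : MvPolynomial τ R) :
    (aeval g p).totalDegree ≤ p.totalDegree * L := by
  rw [aeval_def, eval₂_eq]
  refine totalDegree_finsetSum_le fun e he ↦ ?_
  calc
    _ ≤ (algebraMap R (MvPolynomial σ R) (p.coeff e)).totalDegree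
          + (∏ i ∈ e.support, g i ^ e i).totalDegree := totalDegree_mul _ _
    _ ≤ 0 + ∑ i ∈ e.support, e i * L := by
      refine add_le_add (totalDegree_C _).le ((totalDegree_finsetProd _ _).trans ?_)
      exact Finset.sum_le_sum fun i _ ↦
        (totalDegree_pow _ _).trans (Nat.mul_le_mul_left _ (hg i))
    _ = (e.sum fun _ k ↦ k) * L := by rw [zero_add, ← Finset.sum_mul, Finsupp.sum]
    _ ≤ p.totalDegree * L := Nat.mul_le_mul_right _ (le_totalDegree he)

theorem charpoly_coeff_eq_aeval_univ [CommRing R] [Fintype ι] [DecidableEq ι]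
    (M : Matrix ι ι (MvPolynomial σ R)) (k : ℕ) :
    M.charpoly.coeff k =
      aeval (fun p : ι × ι ↦ M p.1 p.2) ((Matrix.charpoly.univ R ι).coeff k) :=
  (Matrix.charpoly.univ_coeff_eval₂Hom ι C (fun p ↦ M p.1 p.2) k).symm

theorem totalDegree_charpoly_univ_coeff_le [CommRing R] [Nontrivial R] [Fintype ι]
    [DecidableEq ι] (k : ℕ) :
    ((Matrix.charpoly.univ R ι).coeff k).totalDegree ≤ Fintype.card ι := by
  rcases le_or_gt k (Fintype.card ι) with hk | hk
  · exact (Matrix.charpoly.univ_coeff_isHomogeneous R ι k _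
      (Nat.add_sub_cancel' hk)).totalDegree_le.trans (Nat.sub_le _ _)
  · rw [Polynomial.coeff_eq_zero_of_natDegree_lt (by rwa [Matrix.charpoly.univ_natDegree]),
      totalDegree_zero]
    exact Nat.zero_le _

theorem totalDegree_charpoly_coeff_le [CommRing R] [Nontrivial R] [Fintype ι] [DecidableEq ι]
    {M : Matrix ι ι (MvPolynomial σ R)} {L : ℕ} (hM : ∀ i j, (M i j).totalDegree ≤ L) (k : ℕ) :
    (M.charpoly.coeff k).totalDegree ≤ Fintype.card ι * L := by
  have hentry (p : ι × ι) : (M p.1 p.2).totalDegree ≤ L := hM p.1 p.2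
  calc
    (M.charpoly.coeff k).totalDegree
      ≤ ((Matrix.charpoly.univ R ι).coeff k).totalDegree * L := by
        rw [charpoly_coeff_eq_aeval_univ]
        exact totalDegree_aeval_le hentry _
    _ ≤ Fintype.card ι * L := Nat.mul_le_mul_right _ (totalDegree_charpoly_univ_coeff_le k)

end PolynomialEvaluation

section Degeneration

variable {K R : Type*}

/-- The block-diagonal part `p x p + (1 - p) x (1 - p)` of `x` in the Peirce decomposition of the
idempotent `p`. -/
def peirceDiagonal [Ring R] (p x : R) : R :=
  p * x * p + (1 - p) * x * (1 - p)

theorem commute_peirceDiagonal [Ring R] {p : R} (hp : IsIdempotentElem p) (x : R) :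
    Commute p (peirceDiagonal p x) := by
  have left : p * peirceDiagonal p x = p * x * p := by
    simp only [peirceDiagonal, mul_add, ← mul_assoc, hp.eq, hp.mul_one_sub_self, zero_mul, add_zero]
  have right : peirceDiagonal p x * p = p * x * p := by
    simp only [peirceDiagonal, add_mul, mul_assoc, hp.eq, hp.one_sub_mul_self, mul_zero, add_zero]
  exact left.trans right.symm

theorem exists_units_conj_eq_peirceDiagonal_add_smul [Field K] [Ring R] [Algebra K R] {p : R}
    (hp : IsIdempotentElem p) {s : K} (hs : s ≠ 0) :
    ∃ u : Rˣ, ∀ x : R, (1 - p) * x * p = 0 →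
      u * x * ↑u⁻¹ = peirceDiagonal p x + s • (p * x * (1 - p)) := by
  have mul_eq_one {a b : K} (hba : b * a = 1) : (p + a • (1 - p)) * (p + b • (1 - p)) = 1 := by
    simp only [add_mul, mul_add, smul_mul_assoc, mul_smul_comm, hp.eq, hp.one_sub.eq,
      hp.mul_one_sub_self, hp.one_sub_mul_self, smul_zero, add_zero, zero_add, smul_smul, hba,
      one_smul, add_sub_cancel]
  refine ⟨⟨p + s⁻¹ • (1 - p), p + s • (1 - p), mul_eq_one (mul_inv_cancel₀ hs),
    mul_eq_one (inv_mul_cancel₀ hs)⟩, fun x hx ↦ ?_⟩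
  simp only [Units.inv_mk, peirceDiagonal]
  calc (p + s⁻¹ • (1 - p)) * x * (p + s • (1 - p))
      = p * x * p + s • (p * x * (1 - p)) + s⁻¹ • ((1 - p) * x * p)
          + (s * s⁻¹) • ((1 - p) * x * (1 - p)) := by
        simp only [add_mul, mul_add, smul_mul_assoc, mul_smul_comm, smul_add, smul_smul]
        abel
    _ = _ := by
        rw [hx, mul_inv_cancel₀ hs, smul_zero, one_smul]
        abel

end Degeneration

section MatrixInvariants

variable {K : Type} [Field K] {n m : ℕ}

theorem mem_matrixInvariants_iff {f : MvPolynomial (Fin m × Fin n × Fin n) K} :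
    f ∈ matrixInvariants K n m ↔
      ∀ (u : GL (Fin n) K) (x : Fin m → Matrix (Fin n) (Fin n) K),
        aeval (matCoords fun i ↦ u.val * x i * u⁻¹.val) f = aeval (matCoords x) f := by
  simp only [matrixInvariants, Algebra.mem_iInf, AlgHom.mem_equalizer]

theorem homogeneousComponent_mem_matrixInvariants [Infinite K]
    {f : MvPolynomial (Fin m × Fin n × Fin n) K} (hf : f ∈ matrixInvariants K n m) (d : ℕ) :
    homogeneousComponent d f ∈ matrixInvariants K n m := by
  rw [mem_matrixInvariants_iff] at hf ⊢
  intro u x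
  refine aeval_homogeneousComponent_eq (fun s ↦ ?_) d
  have conj_smul : s • matCoords (fun i ↦ u.val * x i * u⁻¹.val) =
      matCoords fun i ↦ u.val * (s • x i) * u⁻¹.val := by
    simp only [mul_smul_comm, smul_mul_assoc]
    rfl
  rw [conj_smul]
  exact hf u fun i ↦ s • x i

/-- The tuples `x` and `y` have the same value under every invariant, i.e. they define the same
point of the categorical quotient. -/
def InvariantsAgree (x y : Fin m → Matrix (Fin n) (Fin n) K) : Prop :=
  ∀ f ∈ matrixInvariants K n m, aeval (matCoords x) f = aeval (matCoords y) f

/-- The tuples `x` and `y` have the same value under every homogeneous invariant of degree at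
most `D`. -/
def InvariantsAgreeUpTo (D : ℕ) (x y : Fin m → Matrix (Fin n) (Fin n) K) : Prop :=
  ∀ f ∈ matrixInvariants K n m, (∃ d ≤ D, f.IsHomogeneous d) →
    aeval (matCoords x) f = aeval (matCoords y) f

variable {x y : Fin m → Matrix (Fin n) (Fin n) K}

theorem InvariantsAgree.trans {z : Fin m → Matrix (Fin n) (Fin n) K} (hxy : InvariantsAgree x y)
    (hyz : InvariantsAgree y z) : InvariantsAgree x z :=
  fun f hf ↦ (hxy f hf).trans (hyz f hf)

theorem InvariantsAgree.symm (h : InvariantsAgree x y) : InvariantsAgree y x :=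
  fun f hf ↦ (h f hf).symm

theorem InvariantsAgree.of_linearEquiv
    (e : TupleModule x ≃ₗ[FreeAlgebra K (Fin m)] TupleModule y) : InvariantsAgree x y := by
  obtain ⟨u, hu⟩ := TupleModule.nonempty_linearEquiv_iff.1 ⟨e⟩
  obtain rfl := funext hu
  exact fun f hf ↦ (mem_matrixInvariants_iff.1 hf u x).symm

theorem InvariantsAgree.peirceDiagonal [Infinite K] {p : Matrix (Fin n) (Fin n) K}
    (hp : IsIdempotentElem p) (hx : ∀ i, (1 - p) * x i * p = 0) :
    InvariantsAgree x fun i ↦ peirceDiagonal p (x i) := by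
  refine fun f hf ↦ (aeval_eq_of_forall_ne_zero_aeval_add_smul_eq
    (b := matCoords fun i ↦ p * x i * (1 - p)) fun s hs ↦ ?_).symm
  obtain ⟨u, hu⟩ := exists_units_conj_eq_peirceDiagonal_add_smul hp hs
  rw [← mem_matrixInvariants_iff.1 hf u x]
  simp only [hu _ (hx _)]
  rfl

theorem InvariantsAgreeUpTo.aeval_eq [Infinite K] {D : ℕ} (h : InvariantsAgreeUpTo D x y)
    {f : MvPolynomial (Fin m × Fin n × Fin n) K} (hf : f ∈ matrixInvariants K n m)
    (hD : f.totalDegree ≤ D) : aeval (matCoords x) f = aeval (matCoords y) f := by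
  rw [← sum_homogeneousComponent f, map_sum, map_sum]
  refine Finset.sum_congr rfl fun d hd ↦ h _ (homogeneousComponent_mem_matrixInvariants hf d)
    ⟨d, ?_, homogeneousComponent_isHomogeneous d f⟩
  exact (Finset.mem_range_succ_iff.1 hd).trans hD

/-- The tuple of generic `n × n` matrices, whose entries are the coordinate functions. -/
noncomputable def genericTuple (K : Type) [Field K] (n m : ℕ) :
    Fin m → Matrix (Fin n) (Fin n) (MvPolynomial (Fin m × Fin n × Fin n) K) :=
  fun i ↦ Matrix.of fun j k ↦ X (i, j, k)

/-- The invariant sending a tuple `x` to the coefficient of index `k` of the characteristic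
polynomial of `a(x)`. -/
noncomputable def charpolyInvariant (n : ℕ) (a : FreeAlgebra K (Fin m)) (k : ℕ) :
    MvPolynomial (Fin m × Fin n × Fin n) K :=
  (FreeAlgebra.lift K (genericTuple K n m) a).charpoly.coeff k

theorem mapMatrix_lift_genericTuple (x : Fin m → Matrix (Fin n) (Fin n) K)
    (a : FreeAlgebra K (Fin m)) :
    (aeval (matCoords x)).mapMatrix (FreeAlgebra.lift K (genericTuple K n m) a) =
      FreeAlgebra.lift K x a := by
  rw [← AlgHom.comp_apply]
  congr 1
  ext i j k
  simp [genericTuple, matCoords]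

theorem aeval_charpolyInvariant (x : Fin m → Matrix (Fin n) (Fin n) K)
    (a : FreeAlgebra K (Fin m)) (k : ℕ) :
    aeval (matCoords x) (charpolyInvariant n a k) =
      (FreeAlgebra.lift K x a).charpoly.coeff k := by
  rw [← mapMatrix_lift_genericTuple, AlgHom.mapMatrix_apply]
  simp only [← AlgHom.coe_toRingHom]
  rw [Matrix.charpoly_map, Polynomial.coeff_map]
  rfl

theorem charpolyInvariant_mem_matrixInvariants (a : FreeAlgebra K (Fin m)) (k : ℕ) :
    charpolyInvariant n a k ∈ matrixInvariants K n m := by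
  refine mem_matrixInvariants_iff.2 fun u x ↦ ?_
  obtain ⟨e⟩ := TupleModule.nonempty_linearEquiv_iff.2
    ⟨u, fun i ↦ (rfl : u.val * x i * u⁻¹.val = _)⟩
  rw [aeval_charpolyInvariant, aeval_charpolyInvariant, ← TupleModule.charpoly_lsmul,
    ← TupleModule.charpoly_lsmul, charpoly_lsmul_eq_of_linearEquiv K e]

theorem InvariantsAgree.charpoly_lift_eq (h : InvariantsAgree x y) (a : FreeAlgebra K (Fin m)) :
    (FreeAlgebra.lift K x a).charpoly = (FreeAlgebra.lift K y a).charpoly := by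
  ext k
  rw [← aeval_charpolyInvariant, ← aeval_charpolyInvariant]
  exact h _ (charpolyInvariant_mem_matrixInvariants a k)

end MatrixInvariants

section Semisimplification

theorem exists_isSemisimpleModule_lt {A M : Type*} [Ring A] [AddCommGroup M] [Module A M]
    [IsArtinian A M] {N Q : Submodule A M} (hN : IsSemisimpleModule A N) (hQ : Q ≠ ⊥)
    (hNQ : Disjoint N Q) : ∃ N' : Submodule A M, IsSemisimpleModule A N' ∧ N < N' := by
  obtain ⟨S, hS, hSQ⟩ := (eq_bot_or_exists_atom_le Q).resolve_left hQ
  have : IsSimpleModule A S := isSimpleModule_iff_isAtom.2 hS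
  refine ⟨N ⊔ S, .sup inferInstance inferInstance, left_lt_sup.2 fun hSN ↦ hS.1 ?_⟩
  exact disjoint_self.1 (hNQ.mono hSN hSQ)

section Projection

variable {K ι : Type*} [Field K] [Fintype ι] {U : Submodule K (ι → K)}
  {p q : Matrix ι ι K}

theorem exists_isProj_mulVecLin (U : Submodule K (ι → K)) :
    ∃ p : Matrix ι ι K, LinearMap.IsProj U p.mulVecLin := by
  classical
  obtain ⟨C, hC⟩ := exists_isCompl U
  refine ⟨LinearMap.toMatrix' (U.projection C hC), ?_⟩
  rw [← Matrix.toLin'_apply', Matrix.toLin'_toMatrix']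
  exact ⟨U.projection_apply_mem hC, fun _ ↦ U.projection_apply_of_mem_left hC⟩

theorem isIdempotentElem_of_isProj_mulVecLin (hp : LinearMap.IsProj U p.mulVecLin) :
    IsIdempotentElem p := by
  classical
  refine ext_of_mulVec_single fun i ↦ ?_
  rw [← mulVec_mulVec]
  exact hp.map_id _ (hp.map_mem _)

variable [DecidableEq ι]

theorem one_sub_mul_mul_eq_zero_of_isProj (hp : LinearMap.IsProj U p.mulVecLin)
    (hq : ∀ z ∈ U, q *ᵥ z ∈ U) : (1 - p) * q * p = 0 :=
  ext_of_mulVec_single fun i ↦ by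
    have := hp.map_id _ (hq _ (hp.map_mem (Pi.single i 1)))
    rw [← mulVec_mulVec, ← mulVec_mulVec, sub_mulVec, one_mulVec, zero_mulVec, sub_eq_zero]
    exact this.symm

theorem peirceDiagonal_mulVec_of_isProj (hp : LinearMap.IsProj U p.mulVecLin)
    (hq : ∀ z ∈ U, q *ᵥ z ∈ U) {z : ι → K} (hz : z ∈ U) : peirceDiagonal p q *ᵥ z = q *ᵥ z := by
  have hpz : p *ᵥ z = z := hp.map_id z hz
  have hpqz : p *ᵥ q *ᵥ z = q *ᵥ z := hp.map_id _ (hq z hz)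
  simp only [peirceDiagonal, add_mulVec, ← mulVec_mulVec, sub_mulVec, one_mulVec, hpz, hpqz,
    sub_self, mulVec_zero, add_zero]

end Projection

namespace TupleModule

theorem finrank_le {K σ : Type*} [Field K] {n : ℕ} {x : σ → Matrix (Fin n) (Fin n) K}
    (U : Submodule (FreeAlgebra K σ) (TupleModule x)) : Module.finrank K U ≤ n := by
  have := Submodule.finrank_le (U.restrictScalars K)
  rwa [(equiv x).finrank_eq, Module.finrank_fin_fun] at this

theorem finrank_eq_iff_eq_top {K σ : Type*} [Field K] {n : ℕ} {x : σ → Matrix (Fin n) (Fin n) K}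
    {U : Submodule (FreeAlgebra K σ) (TupleModule x)} : Module.finrank K U = n ↔ U = ⊤ := by
  rw [← Submodule.restrictScalars_eq_top_iff K (FreeAlgebra K σ) (TupleModule x)]
  refine ⟨fun h ↦ ?_, fun h ↦ ?_⟩
  · apply Submodule.eq_top_of_finrank_eq
    rw [(equiv x).finrank_eq, Module.finrank_fin_fun]
    exact h
  · rw [Submodule.restrictScalars_eq_top_iff] at h
    rw [h, (Submodule.topEquiv.restrictScalars K).finrank_eq, (equiv x).finrank_eq,
      Module.finrank_fin_fun]

variable {K ι σ : Type*} [Field K] [Fintype ι] [DecidableEq ι] {x : σ → Matrix ι ι K}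

/-- The subspace of the column space underlying a submodule of `TupleModule x`. -/
noncomputable def columnSpace (U : Submodule (FreeAlgebra K σ) (TupleModule x)) :
    Submodule K (ι → K) :=
  (U.restrictScalars K).map (equiv x).toLinearMap

theorem mulVec_mem_columnSpace {U : Submodule (FreeAlgebra K σ) (TupleModule x)} (i : σ) :
    ∀ z ∈ columnSpace U, x i *ᵥ z ∈ columnSpace U := by
  rintro _ ⟨z, hz, rfl⟩
  exact ⟨FreeAlgebra.ι K i • z, U.smul_mem _ hz, equiv_ι_smul i z⟩

theorem exists_isCompl_peirceDiagonal {U : Submodule (FreeAlgebra K σ) (TupleModule x)}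
    {p : Matrix ι ι K} (hp : LinearMap.IsProj (columnSpace U) p.mulVecLin) :
    ∃ N Q : Submodule (FreeAlgebra K σ) (TupleModule fun i ↦ peirceDiagonal p (x i)),
      IsCompl N Q ∧ Nonempty (U ≃ₗ[FreeAlgebra K σ] N) := by
  let y (i : σ) := peirceDiagonal p (x i)
  have commute (i : σ) : Commute p (y i) :=
    commute_peirceDiagonal (isIdempotentElem_of_isProj_mulVecLin hp) _
  have mem (z : U) : equiv x z ∈ columnSpace U := ⟨z, z.2, rfl⟩
  let π : Module.End (FreeAlgebra K σ) (TupleModule y) := ofSemiconjBy p commute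
  let incl : U →ₗ[K] TupleModule y :=
    (equiv y).symm ∘ₗ (equiv x).toLinearMap ∘ₗ (U.subtype.restrictScalars K)
  have incl_ι_smul (i : σ) (z : U) :
      incl (FreeAlgebra.ι K i • z) = FreeAlgebra.ι K i • incl z := by
    refine (equiv y).injective ?_
    rw [equiv_ι_smul]
    exact (equiv_ι_smul i _).trans
      (peirceDiagonal_mulVec_of_isProj hp (mulVec_mem_columnSpace i) (mem z)).symm
  let j : U →ₗ[FreeAlgebra K σ] TupleModule y :=
    { incl with map_smul' := map_smul_of_map_ι_smul incl incl_ι_smul }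
  have j_injective : Function.Injective j := Subtype.val_injective
  have isProj : LinearMap.IsProj (LinearMap.range j) π := by
    constructor
    · intro z
      obtain ⟨u, hu, hz⟩ := hp.map_mem (equiv y z)
      exact ⟨⟨u, hu⟩, hz⟩
    · rintro _ ⟨z, rfl⟩
      exact hp.map_id _ (mem z)
  exact ⟨_, _, isProj.isCompl, ⟨.ofInjective j j_injective⟩⟩

end TupleModule

section InvariantsAgree

variable {K : Type} [Field K] {n m : ℕ}

theorem InvariantsAgree.exists_finrank_lt [Infinite K] {x : Fin m → Matrix (Fin n) (Fin n) K}
    (U : Submodule (FreeAlgebra K (Fin m)) (TupleModule x))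
    (hU : IsSemisimpleModule (FreeAlgebra K (Fin m)) U) (hU_ne : U ≠ ⊤) :
    ∃ y, InvariantsAgree x y ∧ ∃ U' : Submodule (FreeAlgebra K (Fin m)) (TupleModule y),
      IsSemisimpleModule (FreeAlgebra K (Fin m)) U' ∧
        Module.finrank K U < Module.finrank K U' := by
  obtain ⟨p, hp⟩ := exists_isProj_mulVecLin (TupleModule.columnSpace U)
  obtain ⟨N, Q, hNQ, ⟨e⟩⟩ := TupleModule.exists_isCompl_peirceDiagonal hp
  have finrank_N : Module.finrank K N = Module.finrank K U :=
    (e.restrictScalars K).finrank_eq.symm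
  have hN : IsSemisimpleModule (FreeAlgebra K (Fin m)) N := .congr e.symm
  have hQ : Q ≠ ⊥ := by
    rintro rfl
    obtain rfl := eq_top_of_isCompl_bot hNQ
    exact hU_ne <| TupleModule.finrank_eq_iff_eq_top.1 <|
      finrank_N.symm.trans (TupleModule.finrank_eq_iff_eq_top.2 rfl)
  have : IsArtinian (FreeAlgebra K (Fin m)) (TupleModule fun i ↦ _root_.peirceDiagonal p (x i)) :=
    isArtinian_of_tower K inferInstance
  obtain ⟨U', hU', hlt⟩ := exists_isSemisimpleModule_lt hN hQ hNQ.disjoint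
  refine ⟨_, .peirceDiagonal (isIdempotentElem_of_isProj_mulVecLin hp) fun i ↦
    one_sub_mul_mul_eq_zero_of_isProj hp (TupleModule.mulVec_mem_columnSpace i), U', hU', ?_⟩
  rw [← finrank_N]
  exact Submodule.finrank_lt_finrank_of_lt (s := N.restrictScalars K) (t := U'.restrictScalars K)
    hlt

theorem InvariantsAgree.exists_isSemisimpleModule_of_submodule [Infinite K]
    (x : Fin m → Matrix (Fin n) (Fin n) K)
    (U : Submodule (FreeAlgebra K (Fin m)) (TupleModule x))
    (hU : IsSemisimpleModule (FreeAlgebra K (Fin m)) U) :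
    ∃ y, InvariantsAgree x y ∧
      IsSemisimpleModule (FreeAlgebra K (Fin m)) (TupleModule y) := by
  by_cases hU_top : U = ⊤
  · subst hU_top
    exact ⟨x, fun f _ ↦ rfl, .congr Submodule.topEquiv.symm⟩
  obtain ⟨x', hxx', U', hU', hlt⟩ := exists_finrank_lt U hU hU_top
  have : n - Module.finrank K U' < n - Module.finrank K U :=
    Nat.sub_lt_sub_left (hlt.trans_le (TupleModule.finrank_le U')) hlt
  obtain ⟨y, hx'y, hy⟩ := exists_isSemisimpleModule_of_submodule x' U' hU'
  exact ⟨y, hxx'.trans hx'y, hy⟩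
termination_by n - Module.finrank K U
decreasing_by assumption

theorem InvariantsAgree.exists_isSemisimpleModule [Infinite K]
    (x : Fin m → Matrix (Fin n) (Fin n) K) :
    ∃ y, InvariantsAgree x y ∧ IsSemisimpleModule (FreeAlgebra K (Fin m)) (TupleModule y) :=
  exists_isSemisimpleModule_of_submodule x ⊥ <|
    (isSemisimpleModule_iff _ _).2 Subsingleton.instComplementedLattice

end InvariantsAgree

end Semisimplification

section WordLength

theorem pow_le_pow_finrank_sub_one_of_one_le {K R : Type*} [Field K] [Ring R] [Algebra K R]
    [FiniteDimensional K R] {M : Submodule K R} (hM : 1 ≤ M) (k : ℕ) :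
    M ^ k ≤ M ^ (Module.finrank K R - 1) := by
  nontriviality R
  let d (i : ℕ) : ℕ := Module.finrank K ↥(M ^ i) - 1
  have finrank_pow_pos (i : ℕ) : 0 < Module.finrank K ↥(M ^ i) := by
    rw [Module.finrank_pos_iff, Submodule.nontrivial_iff_ne_bot]
    exact ne_bot_of_le_ne_bot one_ne_zero (one_le_pow₀ hM)
  have pow_eq_pow {i j : ℕ} (hij : i ≤ j) (h : d i = d j) : M ^ i = M ^ j :=
    Submodule.eq_of_le_of_finrank_eq (pow_le_pow_right₀ hM hij) <|
      Nat.sub_one_cancel (finrank_pow_pos i) (finrank_pow_pos j) h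
  have d_mono : Monotone d := fun i j hij ↦
    Nat.sub_le_sub_right (Submodule.finrank_mono (pow_le_pow_right₀ hM hij)) 1
  have d_le (i : ℕ) : d i ≤ Module.finrank K R - 1 :=
    Nat.sub_le_sub_right (Submodule.finrank_le _) 1
  have d_stable (i : ℕ) (h : d i = d (i + 1)) : d (i + 1) = d (i + 2) := by
    have := congrArg (· * M) (pow_eq_pow i.le_succ h)
    simp only [← pow_succ] at this
    exact congrArg (fun N : Submodule K R ↦ Module.finrank K N - 1) this
  obtain hk | hk := le_total k (Module.finrank K R - 1)
  · exact pow_le_pow_right₀ hM hk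
  · exact (pow_eq_pow hk (Nat.stabilises_of_monotone d_mono d_le d_stable hk).symm).ge

/-- The span of the words of length at most one in the free algebra, so that its `k`-th power is
the span of the words of length at most `k`. -/
def letterSpan (K σ : Type*) [Field K] : Submodule K (FreeAlgebra K σ) :=
  Submodule.span K (insert 1 (Set.range (FreeAlgebra.ι K)))

section LetterSpan

variable {K σ : Type*} [Field K]

theorem one_le_letterSpan : 1 ≤ letterSpan K σ :=
  Submodule.one_le.2 (Submodule.subset_span (Set.mem_insert _ _))

theorem exists_mem_letterSpan_pow (a : FreeAlgebra K σ) : ∃ k, a ∈ letterSpan K σ ^ k := by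
  induction a using FreeAlgebra.induction with
  | grade0 r => exact ⟨0, by rw [pow_zero]; exact Submodule.algebraMap_mem r⟩
  | grade1 i =>
    refine ⟨1, ?_⟩
    rw [pow_one]
    exact Submodule.subset_span (Set.mem_insert_of_mem _ ⟨i, rfl⟩)
  | mul a b ha hb =>
    obtain ⟨k, hk⟩ := ha
    obtain ⟨l, hl⟩ := hb
    exact ⟨k + l, by rw [pow_add]; exact Submodule.mul_mem_mul hk hl⟩
  | add a b ha hb =>
    obtain ⟨k, hk⟩ := ha
    obtain ⟨l, hl⟩ := hb
    exact ⟨k + l, add_mem (pow_le_pow_right₀ one_le_letterSpan (k.le_add_right l) hk)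
      (pow_le_pow_right₀ one_le_letterSpan (l.le_add_left k) hl)⟩

theorem exists_mem_letterSpan_pow_eq {R : Type*} [Ring R] [Algebra K R] [FiniteDimensional K R]
    (φ : FreeAlgebra K σ →ₐ[K] R) (a : FreeAlgebra K σ) :
    ∃ b ∈ letterSpan K σ ^ (Module.finrank K R - 1), φ b = φ a := by
  obtain ⟨k, hk⟩ := exists_mem_letterSpan_pow a
  have one_le_map : 1 ≤ (letterSpan K σ).map φ.toLinearMap :=
    (Submodule.map_one φ).ge.trans (Submodule.map_mono one_le_letterSpan)
  have mem : φ a ∈ (letterSpan K σ).map φ.toLinearMap ^ k := by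
    rw [← Submodule.map_pow]
    exact Submodule.mem_map_of_mem hk
  have := pow_le_pow_finrank_sub_one_of_one_le one_le_map k mem
  rwa [← Submodule.map_pow] at this

end LetterSpan

variable {K : Type} [Field K] {n m : ℕ}

theorem totalDegree_lift_genericTuple_letterSpan_le {a : FreeAlgebra K (Fin m)}
    (ha : a ∈ letterSpan K (Fin m)) (i j : Fin n) :
    (FreeAlgebra.lift K (genericTuple K n m) a i j).totalDegree ≤ 1 := by
  induction ha using Submodule.span_induction with
  | mem a ha =>
    obtain rfl | ⟨t, rfl⟩ := ha
    · rw [map_one, Matrix.one_apply]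
      split_ifs <;> simp
    · rw [FreeAlgebra.lift_ι_apply]
      exact (totalDegree_X _).le
  | zero => simp
  | add a b _ _ ha hb =>
    rw [map_add, Matrix.add_apply]
    exact (totalDegree_add _ _).trans (max_le ha hb)
  | smul r a _ ha =>
    rw [map_smul, Matrix.smul_apply]
    exact (totalDegree_smul_le _ _).trans ha

theorem totalDegree_lift_genericTuple_le {k : ℕ} {a : FreeAlgebra K (Fin m)}
    (ha : a ∈ letterSpan K (Fin m) ^ k) (i j : Fin n) :
    (FreeAlgebra.lift K (genericTuple K n m) a i j).totalDegree ≤ k := by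
  induction ha using Submodule.pow_induction_on_left' generalizing i j with
  | algebraMap r =>
    rw [AlgHom.commutes, Matrix.algebraMap_matrix_apply]
    split_ifs <;> simp [MvPolynomial.algebraMap_eq]
  | add a b k _ _ ha hb =>
    rw [map_add, Matrix.add_apply]
    exact (totalDegree_add _ _).trans (max_le (ha i j) (hb i j))
  | mem_mul a ha k b _ hb =>
    rw [map_mul, Matrix.mul_apply]
    refine totalDegree_finsetSum_le fun l _ ↦ (totalDegree_mul _ _).trans ?_
    rw [Nat.succ_eq_one_add]
    exact add_le_add (totalDegree_lift_genericTuple_letterSpan_le ha i l) (hb l j)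

theorem totalDegree_charpolyInvariant_le {L : ℕ} {a : FreeAlgebra K (Fin m)}
    (ha : a ∈ letterSpan K (Fin m) ^ L) (k : ℕ) :
    (charpolyInvariant n a k).totalDegree ≤ n * L := by
  have := totalDegree_charpoly_coeff_le (totalDegree_lift_genericTuple_le (n := n) ha) k
  rwa [Fintype.card_fin] at this

theorem InvariantsAgreeUpTo.charpoly_lift_eq [Infinite K] {v w : Fin m → Matrix (Fin n) (Fin n) K}
    (h : InvariantsAgreeUpTo (n * (2 * n ^ 2 - 1)) v w) (a : FreeAlgebra K (Fin m)) :
    (FreeAlgebra.lift K v a).charpoly = (FreeAlgebra.lift K w a).charpoly := by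
  let evalPair := (FreeAlgebra.lift K v).prod (FreeAlgebra.lift K w)
  have finrank_eq : Module.finrank K (Matrix (Fin n) (Fin n) K × Matrix (Fin n) (Fin n) K) =
      2 * n ^ 2 := by
    rw [Module.finrank_prod, Module.finrank_matrix, Module.finrank_self, Fintype.card_fin]
    ring
  obtain ⟨b, hb, hab⟩ := exists_mem_letterSpan_pow_eq evalPair a
  rw [finrank_eq] at hb
  have hv : FreeAlgebra.lift K v b = FreeAlgebra.lift K v a := congrArg Prod.fst hab
  have hw : FreeAlgebra.lift K w b = FreeAlgebra.lift K w a := congrArg Prod.snd hab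
  rw [← hv, ← hw]
  ext k
  rw [← aeval_charpolyInvariant, ← aeval_charpolyInvariant]
  exact h.aeval_eq (charpolyInvariant_mem_matrixInvariants b k)
    (totalDegree_charpolyInvariant_le hb k)

end WordLength

theorem mul_two_mul_sq_sub_one_le_pow_six (n : ℕ) : n * (2 * n ^ 2 - 1) ≤ n ^ 6 := by
  have two_mul_le : 2 * n ^ 2 ≤ n ^ 4 + 1 := by
    zify
    linarith [two_mul_le_add_sq ((n : ℤ) ^ 2) 1]
  calc n * (2 * n ^ 2 - 1) ≤ n ^ 2 * n ^ 4 :=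
        Nat.mul_le_mul (Nat.le_self_pow two_ne_zero n) (Nat.sub_le_of_le_add two_mul_le)
    _ = n ^ 6 := (pow_add n 2 4).symm

theorem InvariantsAgreeUpTo.invariantsAgree {K : Type} [Field K] [Infinite K] {n m : ℕ}
    {v w : Fin m → Matrix (Fin n) (Fin n) K}
    (h : InvariantsAgreeUpTo (n * (2 * n ^ 2 - 1)) v w) : InvariantsAgree v w := by
  obtain ⟨y, hvy, hy⟩ := InvariantsAgree.exists_isSemisimpleModule v
  obtain ⟨z, hwz, hz⟩ := InvariantsAgree.exists_isSemisimpleModule w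
  have charpoly_eq (a : FreeAlgebra K (Fin m)) :
      (FreeAlgebra.lift K y a).charpoly = (FreeAlgebra.lift K z a).charpoly :=
    (hvy.charpoly_lift_eq a).symm.trans <| (h.charpoly_lift_eq a).trans (hwz.charpoly_lift_eq a)
  obtain ⟨e⟩ : Nonempty (TupleModule y ≃ₗ[FreeAlgebra K (Fin m)] TupleModule z) := by
    refine nonempty_linearEquiv_of_charpoly_lsmul_eq (K := K) fun a ↦ ?_
    rw [TupleModule.charpoly_lsmul, TupleModule.charpoly_lsmul, charpoly_eq]
  exact hvy.trans ((InvariantsAgree.of_linearEquiv e).trans hwz.symm)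

theorem stmt_8_general (K : Type) [Field K] [Infinite K] (n m : ℕ)
    (v w : Fin m → Matrix (Fin n) (Fin n) K)
    (hvw : ∃ f ∈ matrixInvariants K n m, aeval (matCoords v) f ≠ aeval (matCoords w) f) :
    ∃ g ∈ matrixInvariants K n m, (∃ d ≤ n * (2 * n ^ 2 - 1), g.IsHomogeneous d) ∧
      aeval (matCoords v) g ≠ aeval (matCoords w) g := by
  obtain ⟨f, hf, hfvw⟩ := hvw
  by_contra! h
  exact hfvw (InvariantsAgreeUpTo.invariantsAgree h f hf)

/-- The homogeneous elements of degree `≤ n^6` in `S(n,m)` form a separating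
subset: any two points of `Mat_{n,n}^m` separated by some invariant are separated by a
homogeneous invariant of degree `≤ n^6`. -/
theorem stmt_8 (K : Type) [Field K] [IsAlgClosed K] (n m : ℕ) (hn : 0 < n) (hm : 0 < m)
    (v w : Fin m → Matrix (Fin n) (Fin n) K)
    (hvw : ∃ f ∈ matrixInvariants K n m, aeval (matCoords v) f ≠ aeval (matCoords w) f) :
    ∃ g ∈ matrixInvariants K n m, (∃ d ≤ n ^ 6, g.IsHomogeneous d) ∧
      aeval (matCoords v) g ≠ aeval (matCoords w) g := by
  have : Infinite K := IsAlgClosed.instInfinite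
  obtain ⟨g, hg, ⟨d, hd, hgd⟩, hgvw⟩ := stmt_8_general K n m v w hvw
  exact ⟨g, hg, ⟨d, hd.trans (mul_two_mul_sq_sub_one_le_pow_six n), hgd⟩, hgvw⟩
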